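/- arXiv:2107.04579 — 3 statements merged into one kernel-verified Lean document; each statement's English description precedes it below -/
import Mathlib

section
/- Let b and j be integers with 0 ≤ j ≤ q. If γ^b · γ^{(q−1)j} lies in F_q^× (the nonzero elements of the base field F_q inside F_{q^2}), then #Occr(Tr(γ^b · γ^{(q−1)j}), c(γ^b)) = 1, i.e. exactly one index i with 0 ≤ i ≤ q satisfies Tr(γ^b · γ^{(q−1)i}) = Tr(γ^b · γ^{(q−1)j}). -/
open scoped Classical

/-- The number of indices `i` (with `0 ≤ i ≤ q`) where `V i = s`. -/
noncomputable def occr {n : ℕ} {F : Type} (s : F) (V : Fin n → F) : ℕ :=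
  (Finset.filter (fun i => V i = s) Finset.univ).card

/-- The codeword `c(β) = (Tr(β·γ^{(q−1)i}))_{i=0}^{q}` of the irreducible cyclic code
`C_{(q+1,q²)}`. -/
noncomputable def cw (q : ℕ) (F : Type) {K : Type} [Field F] [Field K] [Algebra F K]
    (γ : Kˣ) (β : K) : Fin (q + 1) → F :=
  fun i => Algebra.trace F K (β * (γ : K) ^ (((q : ℤ) - 1) * ((i : ℕ) : ℤ)))

/-!
If `β ω^j = a` lies in the base field, then `β ω^i = a u` with `u = ω^(i-j)`, so equality of the
traces means `Tr u = 2`. When `ω = γ^(q-1)`, also `N(ω) = N(γ)^(q-1) = 1`, hence `N(u) = 1`, and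
the Cayley–Hamilton relation `u² - Tr(u) u + N(u) = 0` of a quadratic extension becomes
`(u - 1)² = 0`. Thus `ω^i = ω^j`, which pins down `i` among `0, …, q` because `ω` has order
`q + 1`.
-/

section QuadraticExtension

variable {R S : Type*} [CommRing R] [Nontrivial R] [CommRing S] [Algebra R S]
  [Algebra.IsQuadraticExtension R S]

lemma sq_sub_trace_mul_add_norm_eq_zero (x : S) :
    x ^ 2 - algebraMap R S (Algebra.trace R S x) * x + algebraMap R S (Algebra.norm R x) = 0 := by
  let basis := Module.Free.chooseBasis R S
  have card_basis : Fintype.card (Module.Free.ChooseBasisIndex R S) = 2 := by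
    rw [← Module.finrank_eq_card_chooseBasisIndex, Algebra.IsQuadraticExtension.finrank_eq_two]
  have cayley_hamilton := Matrix.aeval_self_charpoly (Algebra.leftMulMatrix basis x)
  rw [Matrix.charpoly_of_card_eq_two _ card_basis, Polynomial.aeval_algHom_apply,
    ← Algebra.trace_eq_matrix_trace, ← Algebra.norm_eq_matrix_det] at cayley_hamilton
  simpa using (map_eq_zero_iff _ (Algebra.leftMulMatrix_injective basis)).1 cayley_hamilton

lemma eq_one_of_trace_eq_two_of_norm_eq_one [IsReduced S] {u : S}
    (htrace : Algebra.trace R S u = 2) (hnorm : Algebra.norm R u = 1) : u = 1 := by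
  have hu := sq_sub_trace_mul_add_norm_eq_zero (R := R) u
  rw [htrace, hnorm, map_ofNat, map_one] at hu
  have sub_one_sq : (u - 1) ^ 2 = 0 := by linear_combination hu
  exact sub_eq_zero.1 (pow_eq_zero_iff two_ne_zero |>.1 sub_one_sq)

lemma eq_one_of_trace_algebraMap_mul_eq [NoZeroDivisors R] [IsReduced S] {a : R} (ha : a ≠ 0)
    {u : S} (hnorm : Algebra.norm R u = 1)
    (htrace : Algebra.trace R S (algebraMap R S a * u) = Algebra.trace R S (algebraMap R S a)) :
    u = 1 := by
  refine eq_one_of_trace_eq_two_of_norm_eq_one (R := R) (mul_left_cancel₀ ha ?_) hnorm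
  calc a * Algebra.trace R S u = Algebra.trace R S (algebraMap R S a * u) := by
        rw [← Algebra.smul_def, map_smul, smul_eq_mul]
    _ = a * 2 := by
        rw [htrace, Algebra.trace_algebraMap, Algebra.IsQuadraticExtension.finrank_eq_two,
          nsmul_eq_mul, Nat.cast_ofNat, mul_comm]

lemma trace_mul_zpow_eq_trace_mul_zpow_iff [NoZeroDivisors R] [IsReduced S] {β : S} {ω : Sˣ}
    (hnorm : Algebra.norm R (ω : S) = 1) {i j : ℤ} {a : R} (ha : a ≠ 0)
    (hj : β * ↑(ω ^ j) = algebraMap R S a) :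
    Algebra.trace R S (β * ↑(ω ^ i)) = Algebra.trace R S (β * ↑(ω ^ j)) ↔ ω ^ i = ω ^ j := by
  refine ⟨fun htrace => ?_, fun h => by rw [h]⟩
  have norm_zpow : Algebra.norm R ((ω ^ (i - j) : Sˣ) : S) = 1 := by
    have norm_unit : Units.map (Algebra.norm R (S := S)) ω = 1 := Units.ext hnorm
    rw [← Units.coe_map, map_zpow, norm_unit, one_zpow, Units.val_one]
  have shift : β * ↑(ω ^ i) = algebraMap R S a * ↑(ω ^ (i - j)) := by
    rw [← hj, mul_assoc, ← Units.val_mul, ← zpow_add, add_sub_cancel]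
  rw [shift, hj] at htrace
  have zpow_sub_eq_one : ω ^ (i - j) = 1 :=
    Units.ext (eq_one_of_trace_algebraMap_mul_eq ha norm_zpow htrace)
  rwa [zpow_sub, mul_inv_eq_one] at zpow_sub_eq_one

end QuadraticExtension

section OrderOf

variable {G : Type*} [Group G] {g : G}

lemma existsUnique_fin_zpow_eq {n : ℕ} [NeZero n] (hg : orderOf g = n) (j : ℤ) :
    ∃! i : Fin n, g ^ ((i : ℕ) : ℤ) = g ^ j := by
  subst hg
  have finite_order : IsOfFinOrder g := orderOf_ne_zero_iff.1 (NeZero.ne _)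
  simpa [Subtype.ext_iff, finEquivZPowers_apply] using
    (finEquivZPowers finite_order).bijective.existsUnique ⟨g ^ j, j, rfl⟩

lemma orderOf_zpow_sub_one {q : ℕ} (hq : 1 < q) (hg : orderOf g = q ^ 2 - 1) :
    orderOf (g ^ ((q : ℤ) - 1)) = q + 1 := by
  have factorization : q ^ 2 - 1 = (q + 1) * (q - 1) := by simpa using Nat.sq_sub_sq q 1
  rw [← Nat.cast_pred (by omega), zpow_natCast,
    orderOf_pow_of_dvd (by omega) (by rw [hg, factorization]; exact dvd_mul_left _ _),
    hg, factorization, Nat.mul_div_cancel _ (by omega)]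

end OrderOf

section FiniteField

variable {F K : Type*} [Field F] [Fintype F]

lemma isQuadraticExtension_of_card_eq_sq [Ring K] [Fintype K] [Algebra F K]
    (hK : Fintype.card K = Fintype.card F ^ 2) : Algebra.IsQuadraticExtension F K where
  finrank_eq_two' :=
    Nat.pow_right_injective Fintype.one_lt_card (Module.card_eq_pow_finrank.symm.trans hK)

lemma norm_zpow_card_sub_one [Ring K] [Algebra F K] (x : Kˣ) :
    Algebra.norm F ((x ^ ((Fintype.card F : ℤ) - 1) : Kˣ) : K) = 1 := by
  rw [← Nat.cast_pred Fintype.card_pos, zpow_natCast, Units.val_pow_eq_pow_val, map_pow]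
  exact FiniteField.pow_card_sub_one_eq_one _ (x.isUnit.map (Algebra.norm F)).ne_zero

lemma orderOf_zpow_card_sub_one [DivisionRing K] [Fintype K]
    (hK : Fintype.card K = Fintype.card F ^ 2) {γ : Kˣ} (hγ : ∀ x, x ∈ Subgroup.zpowers γ) :
    orderOf (γ ^ ((Fintype.card F : ℤ) - 1)) = Fintype.card F + 1 := by
  refine orderOf_zpow_sub_one Fintype.one_lt_card ?_
  rw [orderOf_eq_card_of_forall_mem_zpowers hγ, Nat.card_units, Nat.card_eq_fintype_card, hK]

end FiniteField

lemma occr_eq_one_iff {n : ℕ} {F : Type} {s : F} {V : Fin n → F} :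
    occr s V = 1 ↔ ∃! i, V i = s := by
  simp [occr, Finset.card_eq_one, Finset.eq_singleton_iff_unique_mem, ExistsUnique]

theorem occr_eq_one_of_mem_base_general {q : ℕ} {F K : Type} [Field F] [Field K] [Algebra F K]
    [Algebra.IsQuadraticExtension F K] {γ : Kˣ}
    (hnorm : Algebra.norm F ((γ ^ ((q : ℤ) - 1) : Kˣ) : K) = 1)
    (horder : orderOf (γ ^ ((q : ℤ) - 1)) = q + 1) {β : K} {j : ℤ}
    (hmem : β * (γ : K) ^ (((q : ℤ) - 1) * j) ∈ Set.range (algebraMap F K))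
    (hne : β * (γ : K) ^ (((q : ℤ) - 1) * j) ≠ 0) :
    occr (Algebra.trace F K (β * (γ : K) ^ (((q : ℤ) - 1) * j))) (cw q F γ β) = 1 := by
  have zpow_mul_eq_val (k : ℤ) :
      (γ : K) ^ (((q : ℤ) - 1) * k) = ((γ ^ ((q : ℤ) - 1)) ^ k : Kˣ) := by
    rw [← zpow_mul, Units.val_zpow_eq_zpow_val]
  rw [zpow_mul_eq_val] at hmem hne ⊢
  obtain ⟨a, ha⟩ := hmem
  have ha0 : a ≠ 0 := by
    rintro rfl
    exact hne (by rw [← ha, map_zero])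
  simp only [occr_eq_one_iff, cw, zpow_mul_eq_val,
    trace_mul_zpow_eq_trace_mul_zpow_iff hnorm ha0 ha.symm]
  exact existsUnique_fin_zpow_eq horder j

/-- If `γ^b · γ^{(q−1)j}` lies in `F_q^×`, then the symbol
`Tr(γ^b · γ^{(q−1)j})` occurs exactly once in the codeword `c(γ^b)`. -/
theorem occr_eq_one_of_mem_base
    (q : ℕ) (F K : Type) [Field F] [Fintype F] [Field K] [Fintype K] [Algebra F K]
    (hF : Fintype.card F = q) (hK : Fintype.card K = q ^ 2)
    (γ : Kˣ) (hγ : ∀ x : Kˣ, x ∈ Subgroup.zpowers γ)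
    (htr : ∀ x : K, algebraMap F K (Algebra.trace F K x) = x + x ^ q)
    (b j : ℤ) (hj0 : 0 ≤ j) (hjq : j ≤ (q : ℤ))
    (hmem : (γ : K) ^ b * (γ : K) ^ (((q : ℤ) - 1) * j) ∈ Set.range (algebraMap F K) ∧
      (γ : K) ^ b * (γ : K) ^ (((q : ℤ) - 1) * j) ≠ 0) :
    occr (Algebra.trace F K ((γ : K) ^ b * (γ : K) ^ (((q : ℤ) - 1) * j)))
      (cw q F γ ((γ : K) ^ b)) = 1 := by
  subst hF
  have := isQuadraticExtension_of_card_eq_sq hK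
  exact occr_eq_one_of_mem_base_general (norm_zpow_card_sub_one γ)
    (orderOf_zpow_card_sub_one hK hγ) hmem.1 hmem.2
end

section
/- Let b and j be integers with 0 ≤ j ≤ q. If γ^b · γ^{(q−1)j} does not lie in F_q^× (the nonzero elements of the base field F_q inside F_{q^2}), then #Occr(Tr(γ^b · γ^{(q−1)j}), c(γ^b)) = 2, i.e. exactly two indices i with 0 ≤ i ≤ q satisfy Tr(γ^b · γ^{(q−1)i}) = Tr(γ^b · γ^{(q−1)j}). -/
open scoped Classical

/-!
Let `q = |F|`. In a quadratic extension `K / F`, an element with the same trace `x + x ^ q` and the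
same norm `x ^ (q + 1)` as `x` is a root of the same quadratic polynomial, hence equals `x` or
`x ^ q`; these differ exactly when `x ∉ F`. The powers of `γ ^ (q - 1)` are the elements of norm
`1`, so the codeword of `β` lists, without repetition, the traces of all elements with the norm of
`β`.
-/

section Counting

open Polynomial

variable {R : Type*} [CommRing R] [IsDomain R] {n : ℕ} {ζ : R}

theorem mul_pow_injective_of_isPrimitiveRoot (hζ : IsPrimitiveRoot ζ n) {β : R} (hβ : β ≠ 0) :
    Function.Injective fun i : Fin n => β * ζ ^ (i : ℕ) := fun i k hik =>
  Fin.ext (hζ.pow_inj i.isLt k.isLt (mul_left_cancel₀ hβ hik))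

theorem image_mul_pow_eq_nthRootsFinset (hζ : IsPrimitiveRoot ζ n) (β : R) :
    Finset.univ.image (fun i : Fin n => β * ζ ^ (i : ℕ)) = nthRootsFinset n (β ^ n) := by
  ext y
  simp only [nthRootsFinset, hζ.nthRoots_eq rfl, Finset.mem_image, Finset.mem_univ, true_and,
    Multiset.mem_toFinset, Multiset.mem_map, Multiset.mem_range, Fin.exists_iff, exists_prop,
    mul_comm β]

theorem occr_mul_pow_eq_card_filter_nthRootsFinset {S : Type} (hζ : IsPrimitiveRoot ζ n) {β : R}
    (hβ : β ≠ 0) (f : R → S) (s : S) :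
    occr s (fun i : Fin n => f (β * ζ ^ (i : ℕ))) =
      ((nthRootsFinset n (β ^ n)).filter fun y => f y = s).card := by
  rw [← image_mul_pow_eq_nthRootsFinset hζ, Finset.filter_image,
    Finset.card_image_of_injective _ (mul_pow_injective_of_isPrimitiveRoot hζ hβ), occr]

end Counting

open Polynomial in
theorem mem_range_algebraMap_iff_pow_natCard_eq {F R : Type*} [Field F] [Finite F] [CommRing R]
    [IsDomain R] [Algebra F R] {x : R} :
    x ∈ Set.range (algebraMap F R) ↔ x ^ Nat.card F = x := by
  constructor
  · rintro ⟨a, rfl⟩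
    have := Fintype.ofFinite F
    rw [← map_pow, Nat.card_eq_fintype_card, FiniteField.pow_card]
  · intro hx
    have hne : (X ^ Nat.card F - X : F[X]) ≠ 0 :=
      FiniteField.X_pow_card_sub_X_ne_zero F Finite.one_lt_card
    exact splits_X_pow_nat_card_sub_X.mem_range_of_isRoot hne (by simp [hx])

section Quadratic

open Polynomial

variable {F K : Type*} [Field F] [Field K] [Finite K] [Algebra F K]

variable (F) in
theorem pow_natCard_pow_finrank (x : K) : x ^ Nat.card F ^ Module.finrank F K = x := by
  have := Fintype.ofFinite K
  rw [← Module.natCard_eq_pow_finrank, Nat.card_eq_fintype_card, FiniteField.pow_card]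

theorem algebraMap_trace_of_finrank_eq_two (h2 : Module.finrank F K = 2) (x : K) :
    algebraMap F K (Algebra.trace F K x) = x + x ^ Nat.card F := by
  simp [FiniteField.algebraMap_trace_eq_sum_pow, h2, Finset.sum_range_succ]

theorem pow_natCard_add_one_eq_and_trace_eq_iff (h2 : Module.finrank F K = 2) {x y : K} :
    y ^ (Nat.card F + 1) = x ^ (Nat.card F + 1) ∧ Algebra.trace F K y = Algebra.trace F K x ↔
      y = x ∨ y = x ^ Nat.card F := by
  rw [← (algebraMap F K).injective.eq_iff, algebraMap_trace_of_finrank_eq_two h2,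
    algebraMap_trace_of_finrank_eq_two h2, pow_succ, pow_succ]
  constructor
  · rintro ⟨hnorm, htrace⟩
    have hroot : (y - x) * (y - x ^ Nat.card F) = 0 := by
      linear_combination y * htrace - hnorm
    simpa only [mul_eq_zero, sub_eq_zero] using hroot
  · rintro (rfl | rfl)
    · exact ⟨rfl, rfl⟩
    · have hconj : (x ^ Nat.card F) ^ Nat.card F = x := by
        rw [← pow_mul, ← sq, ← h2, pow_natCard_pow_finrank]
      rw [hconj]
      exact ⟨mul_comm _ _, add_comm _ _⟩

theorem filter_nthRootsFinset_trace_eq (h2 : Module.finrank F K = 2) (x : K) :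
    ((nthRootsFinset (Nat.card F + 1) (x ^ (Nat.card F + 1))).filter fun y =>
      Algebra.trace F K y = Algebra.trace F K x) = {x, x ^ Nat.card F} := by
  ext y
  rw [Finset.mem_filter, mem_nthRootsFinset (Nat.succ_pos _),
    pow_natCard_add_one_eq_and_trace_eq_iff h2, Finset.mem_insert, Finset.mem_singleton]

end Quadratic

theorem finrank_eq_two_of_card_eq_sq {F V : Type*} [Field F] [Fintype F] [AddCommGroup V]
    [Fintype V] [Module F V] (hV : Fintype.card V = Fintype.card F ^ 2) :
    Module.finrank F V = 2 :=
  Nat.pow_right_injective Fintype.one_lt_card (Module.card_eq_pow_finrank.symm.trans hV)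

theorem isPrimitiveRoot_zpow_sub_one_of_card_eq_sq {K : Type*} [Field K] [Fintype K] {q : ℕ}
    (hK : Fintype.card K = q ^ 2) {γ : Kˣ} (hγ : ∀ x : Kˣ, x ∈ Subgroup.zpowers γ) :
    IsPrimitiveRoot ((γ : K) ^ ((q : ℤ) - 1)) (q + 1) := by
  have hq : 1 < q := (one_lt_pow_iff_of_nonneg q.zero_le two_ne_zero).mp
    (hK ▸ Fintype.one_lt_card)
  have hord : orderOf γ = (q - 1) * (q + 1) := by
    rw [orderOf_eq_card_of_forall_mem_zpowers hγ, Nat.card_eq_fintype_card, Fintype.card_units,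
      hK, mul_comm, ← Nat.sq_sub_sq, one_pow]
  have hprim : IsPrimitiveRoot (γ : K) (orderOf γ) :=
    IsPrimitiveRoot.coe_units_iff.mpr (.orderOf γ)
  have hpow := hprim.pow (orderOf_pos γ) hord
  rwa [← zpow_natCast, Nat.cast_pred (by omega)] at hpow

theorem cw_eq_trace_mul_pow (q : ℕ) {F K : Type} [Field F] [Field K] [Algebra F K] (γ : Kˣ)
    (β : K) :
    cw q F γ β =
      fun i : Fin (q + 1) => Algebra.trace F K (β * ((γ : K) ^ ((q : ℤ) - 1)) ^ (i : ℕ)) := by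
  funext i
  rw [cw, zpow_mul, zpow_natCast]

theorem occr_eq_two_of_not_mem_base_general {q : ℕ} {F K : Type} [Field F] [Field K] [Finite K]
    [Algebra F K] (hF : Nat.card F = q) (h2 : Module.finrank F K = 2) {γ : Kˣ}
    (hγ : IsPrimitiveRoot ((γ : K) ^ ((q : ℤ) - 1)) (q + 1)) (β : K) (j : ℤ)
    (hx : β * (γ : K) ^ (((q : ℤ) - 1) * j) ∉ Set.range (algebraMap F K)) :
    occr (Algebra.trace F K (β * (γ : K) ^ (((q : ℤ) - 1) * j))) (cw q F γ β) = 2 := by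
  have : Finite F := Finite.of_injective _ (algebraMap F K).injective
  subst hF
  set x := β * (γ : K) ^ (((Nat.card F : ℤ) - 1) * j) with hxdef
  have hβ : β ≠ 0 := by
    rintro rfl
    exact hx ⟨0, by rw [hxdef, zero_mul, map_zero]⟩
  have hnorm : β ^ (Nat.card F + 1) = x ^ (Nat.card F + 1) := by
    rw [hxdef, mul_pow, zpow_mul, ← zpow_natCast (_ ^ j), zpow_comm, hγ.zpow_eq_one, one_zpow,
      mul_one]
  have hconj : x ≠ x ^ Nat.card F := fun h =>
    hx (mem_range_algebraMap_iff_pow_natCard_eq.mpr h.symm)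
  rw [cw_eq_trace_mul_pow, occr_mul_pow_eq_card_filter_nthRootsFinset hγ hβ, hnorm,
    filter_nthRootsFinset_trace_eq h2, Finset.card_pair hconj]

/-- If `γ^b · γ^{(q−1)j}` does not lie in `F_q^×`, then the symbol
`Tr(γ^b · γ^{(q−1)j})` occurs exactly twice in the codeword `c(γ^b)`. -/
theorem occr_eq_two_of_not_mem_base
    (q : ℕ) (F K : Type) [Field F] [Fintype F] [Field K] [Fintype K] [Algebra F K]
    (hF : Fintype.card F = q) (hK : Fintype.card K = q ^ 2)
    (γ : Kˣ) (hγ : ∀ x : Kˣ, x ∈ Subgroup.zpowers γ)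
    (htr : ∀ x : K, algebraMap F K (Algebra.trace F K x) = x + x ^ q)
    (b j : ℤ) (hj0 : 0 ≤ j) (hjq : j ≤ (q : ℤ))
    (hmem : ¬((γ : K) ^ b * (γ : K) ^ (((q : ℤ) - 1) * j) ∈ Set.range (algebraMap F K) ∧
      (γ : K) ^ b * (γ : K) ^ (((q : ℤ) - 1) * j) ≠ 0)) :
    occr (Algebra.trace F K ((γ : K) ^ b * (γ : K) ^ (((q : ℤ) - 1) * j)))
      (cw q F γ ((γ : K) ^ b)) = 2 :=
  occr_eq_two_of_not_mem_base_general (Nat.card_eq_fintype_card.trans hF)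
    (finrank_eq_two_of_card_eq_sq (hF ▸ hK))
    (isPrimitiveRoot_zpow_sub_one_of_card_eq_sq hK hγ) _ j
    fun h => hmem ⟨h, mul_ne_zero (zpow_ne_zero _ γ.ne_zero) (zpow_ne_zero _ γ.ne_zero)⟩
end

section
/- Let s ∈ F_q be nonzero. Then the number of nonzero β ∈ F_{q^2} such that #Occr(s, c(β)) = 1 equals q+1 if q is odd, and equals 0 if q is even. -/
/-!
As `γ ^ (q - 1)` has order `q + 1`, the entries of `c(β)`, `β ≠ 0`, are the traces of the elements
of norm `β ^ (q + 1)`. The elements of given trace and norm are among the roots in `K` of one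
quadratic polynomial, and `x ↦ x ^ q` permutes them; so there is exactly one of them if and only if
the polynomial is `(X - a) ^ 2` with `a ^ q = a`. Trace `s ≠ 0` then forces `2 * a = s`: impossible
in characteristic two, while in odd characteristic `a = s / 2`, and `β` has to be one of the `q + 1`
elements of norm `a ^ 2`.
-/

open scoped Classical

/-- The Hamming weight of a vector: the number of its nonzero entries. -/
noncomputable def hwt {n : ℕ} {F : Type} [Zero F] (V : Fin n → F) : ℕ :=
  (Finset.filter (fun i => V i ≠ 0) Finset.univ).card

theorem eq_or_eq_of_add_eq_add_of_mul_eq_mul {R : Type*} [CommRing R] [NoZeroDivisors R]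
    {x x' y y' : R} (hadd : y + y' = x + x') (hmul : y * y' = x * x') : y = x ∨ y = x' := by
  have hroot : (y - x) * (y - x') = 0 := by linear_combination y * hadd - hmul
  simpa only [mul_eq_zero, sub_eq_zero] using hroot

theorem existsUnique_add_eq_and_mul_eq_iff {R : Type*} [CommRing R] [NoZeroDivisors R]
    {σ : R → R} (hσ : Function.Involutive σ) (t n : R) :
    (∃! x, x + σ x = t ∧ x * σ x = n) ↔ ∃ a, σ a = a ∧ 2 * a = t ∧ a ^ 2 = n := by
  constructor
  · rintro ⟨a, ⟨hadd, hmul⟩, huniq⟩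
    have hfix : σ a = a :=
      huniq (σ a) ⟨by rw [hσ, add_comm, hadd], by rw [hσ, mul_comm, hmul]⟩
    rw [hfix] at hadd hmul
    exact ⟨a, hfix, by rw [two_mul, hadd], by rw [sq, hmul]⟩
  · rintro ⟨a, hfix, rfl, rfl⟩
    refine ⟨a, ⟨by rw [hfix, two_mul], by rw [hfix, sq]⟩, fun y ⟨hadd, hmul⟩ => ?_⟩
    rw [two_mul] at hadd
    rw [sq] at hmul
    exact or_self_iff.1 (eq_or_eq_of_add_eq_add_of_mul_eq_mul hadd hmul)

theorem card_filter_mul_pow_eq_card_filter_pow_eq {K : Type*} [Field K] [Fintype K] {k : ℕ}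
    [NeZero k] {ζ α : K} (hζ : IsPrimitiveRoot ζ k) (hα : α ≠ 0) (p : K → Prop) :
    (Finset.univ.filter fun i : Fin k => p (α * ζ ^ (i : ℕ))).card =
      (Finset.univ.filter fun x : K => x ^ k = α ^ k ∧ p x).card := by
  refine Finset.card_bij (fun i _ => α * ζ ^ (i : ℕ)) (fun i hi => ?_) (fun i _ j _ hij => ?_)
    (fun x hx => ?_)
  · have hpow : (α * ζ ^ (i : ℕ)) ^ k = α ^ k := by
      rw [mul_pow, pow_right_comm, hζ.pow_eq_one, one_pow, mul_one]
    exact Finset.mem_filter.2 ⟨Finset.mem_univ _, hpow, (Finset.mem_filter.1 hi).2⟩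
  · exact Fin.ext (hζ.pow_inj i.2 j.2 (mul_left_cancel₀ hα hij))
  · obtain ⟨-, hpow, hpx⟩ := Finset.mem_filter.1 hx
    have hroot : (x / α) ^ k = 1 := by rw [div_pow, hpow, div_self (pow_ne_zero k hα)]
    obtain ⟨i, hi, hix⟩ := hζ.eq_pow_of_pow_eq_one hroot
    have hx' : α * ζ ^ i = x := by rw [hix, mul_div_cancel₀ x hα]
    exact ⟨⟨i, hi⟩, Finset.mem_filter.2 ⟨Finset.mem_univ _, by rwa [hx']⟩, hx'⟩

theorem card_filter_pow_eq_pow {K : Type*} [Field K] [Fintype K] {k : ℕ} [NeZero k] {ζ α : K}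
    (hζ : IsPrimitiveRoot ζ k) (hα : α ≠ 0) :
    (Finset.univ.filter fun x : K => x ^ k = α ^ k).card = k := by
  simpa using (card_filter_mul_pow_eq_card_filter_pow_eq hζ hα fun _ => True).symm

theorem isPrimitiveRoot_pow_of_card_eq {K : Type*} [Field K] [Fintype K] {γ : Kˣ}
    (hγ : ∀ x : Kˣ, x ∈ Subgroup.zpowers γ) {m n : ℕ} (hK : Fintype.card K = m * n + 1) :
    IsPrimitiveRoot ((γ : K) ^ m) n := by
  have horder : orderOf (γ : K) = m * n := by
    rw [orderOf_units, orderOf_eq_card_of_forall_mem_zpowers hγ, Nat.card_units,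
      Nat.card_eq_fintype_card, hK, Nat.add_sub_cancel]
  have hpos : 0 < m * n := by
    have hcard := Fintype.one_lt_card (α := K)
    omega
  exact (IsPrimitiveRoot.orderOf (γ : K)).pow (by rwa [horder]) horder

theorem two_eq_zero_iff_even_card (F : Type*) [Field F] [Fintype F] :
    (2 : F) = 0 ↔ Even (Fintype.card F) := by
  rw [Nat.even_iff, ← FiniteField.even_card_iff_char_two]
  refine ⟨fun h => ?_, fun h => ?_⟩
  · by_contra hchar
    exact Ring.two_ne_zero hchar h
  · exact_mod_cast h ▸ ringChar.Nat.cast_ringChar (R := F)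

theorem cw_apply {q : ℕ} (hq : 1 ≤ q) {F K : Type} [Field F] [Field K] [Algebra F K]
    (γ : Kˣ) (β : K) (i : Fin (q + 1)) :
    cw q F γ β i = Algebra.trace F K (β * ((γ : K) ^ (q - 1)) ^ (i : ℕ)) := by
  rw [cw, ← Nat.cast_pred hq, zpow_mul, zpow_natCast, zpow_natCast]

section QuadraticExtension

variable {q : ℕ} {F K : Type} [Field F] [Field K] [Fintype K] [Algebra F K]

theorem isPrimitiveRoot_pow_sub_one (hK : Fintype.card K = q ^ 2) {γ : Kˣ}
    (hγ : ∀ x : Kˣ, x ∈ Subgroup.zpowers γ) :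
    IsPrimitiveRoot ((γ : K) ^ (q - 1)) (q + 1) := by
  refine isPrimitiveRoot_pow_of_card_eq hγ ?_
  have hpos : 0 < q ^ 2 := hK ▸ Fintype.card_pos
  rw [hK, mul_comm, ← Nat.sq_sub_sq, one_pow, Nat.sub_one_add_one hpos.ne']

theorem occr_cw_eq_card_filter (hK : Fintype.card K = q ^ 2) {γ : Kˣ}
    (hγ : ∀ x : Kˣ, x ∈ Subgroup.zpowers γ) (s : F) {β : K} (hβ : β ≠ 0) :
    occr s (cw q F γ β) =
      (Finset.univ.filter fun x : K =>
        x ^ (q + 1) = β ^ (q + 1) ∧ Algebra.trace F K x = s).card := by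
  have hq : 1 ≤ q := Nat.pos_of_ne_zero (by rintro rfl; simp at hK)
  simp only [occr, cw_apply hq]
  exact card_filter_mul_pow_eq_card_filter_pow_eq (isPrimitiveRoot_pow_sub_one hK hγ) hβ
    (Algebra.trace F K · = s)

theorem occr_cw_eq_one_iff (hK : Fintype.card K = q ^ 2) {γ : Kˣ}
    (hγ : ∀ x : Kˣ, x ∈ Subgroup.zpowers γ)
    (htr : ∀ x : K, algebraMap F K (Algebra.trace F K x) = x + x ^ q)
    (s : F) {β : K} (hβ : β ≠ 0) :
    occr s (cw q F γ β) = 1 ↔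
      ∃ a : K, a ^ q = a ∧ 2 * a = algebraMap F K s ∧ a ^ 2 = β ^ (q + 1) := by
  have hfrob : Function.Involutive fun x : K => x ^ q := fun x => by
    beta_reduce
    rw [← pow_mul, ← sq, ← hK, FiniteField.pow_card]
  rw [occr_cw_eq_card_filter hK hγ s hβ, ← Fintype.existsUnique_iff_card_one,
    ← existsUnique_add_eq_and_mul_eq_iff hfrob]
  refine existsUnique_congr fun x => ?_
  rw [← htr, (algebraMap F K).injective.eq_iff, ← pow_succ', and_comm]

theorem occr_cw_eq_one_iff_pow_eq [Fintype F] (hF : Fintype.card F = q)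
    (hK : Fintype.card K = q ^ 2) {γ : Kˣ} (hγ : ∀ x : Kˣ, x ∈ Subgroup.zpowers γ)
    (htr : ∀ x : K, algebraMap F K (Algebra.trace F K x) = x + x ^ q)
    (h2 : (2 : F) ≠ 0) (s : F) {β : K} (hβ : β ≠ 0) :
    occr s (cw q F γ β) = 1 ↔ β ^ (q + 1) = algebraMap F K (s / 2) ^ (q + 1) := by
  have hfix : algebraMap F K (s / 2) ^ q = algebraMap F K (s / 2) := by
    rw [← map_pow, ← hF, FiniteField.pow_card]
  have hdouble : 2 * algebraMap F K (s / 2) = algebraMap F K s := by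
    rw [← map_ofNat (algebraMap F K) 2, ← map_mul, mul_div_cancel₀ s h2]
  have h2K : (2 : K) ≠ 0 := by
    simpa only [map_ofNat] using (map_ne_zero (algebraMap F K)).2 h2
  rw [occr_cw_eq_one_iff hK hγ htr s hβ, pow_succ (algebraMap F K _), hfix, ← sq]
  constructor
  · rintro ⟨a, -, ha, hsq⟩
    rw [← hsq, mul_left_cancel₀ h2K (ha.trans hdouble.symm)]
  · exact fun h => ⟨_, hfix, hdouble, h.symm⟩

theorem occr_cw_ne_one_of_two_eq_zero (hK : Fintype.card K = q ^ 2) {γ : Kˣ}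
    (hγ : ∀ x : Kˣ, x ∈ Subgroup.zpowers γ)
    (htr : ∀ x : K, algebraMap F K (Algebra.trace F K x) = x + x ^ q)
    (h2 : (2 : F) = 0) {s : F} (hs : s ≠ 0) {β : K} (hβ : β ≠ 0) :
    occr s (cw q F γ β) ≠ 1 := by
  intro hocc
  obtain ⟨a, -, ha, -⟩ := (occr_cw_eq_one_iff hK hγ htr s hβ).1 hocc
  rw [← map_ofNat (algebraMap F K) 2, h2, map_zero, zero_mul] at ha
  exact hs ((map_eq_zero _).1 ha.symm)

end QuadraticExtension

/-- For a nonzero symbol `s ∈ F_q`, the number of nonzero `β ∈ F_{q²}` whose codeword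
`c(β)` contains `s` exactly once is `q+1` if `q` is odd, and `0` if `q` is even. -/
theorem card_occr_eq_one
    (q : ℕ) (F K : Type) [Field F] [Fintype F] [Field K] [Fintype K] [Algebra F K]
    (hF : Fintype.card F = q) (hK : Fintype.card K = q ^ 2)
    (γ : Kˣ) (hγ : ∀ x : Kˣ, x ∈ Subgroup.zpowers γ)
    (htr : ∀ x : K, algebraMap F K (Algebra.trace F K x) = x + x ^ q)
    (s : F) (hs : s ≠ 0) :
    (Odd q →
      (Finset.filter (fun β : K => β ≠ 0 ∧ occr s (cw q F γ β) = 1) Finset.univ).card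
        = q + 1) ∧
    (Even q →
      (Finset.filter (fun β : K => β ≠ 0 ∧ occr s (cw q F γ β) = 1) Finset.univ).card
        = 0) := by
  constructor
  · intro hodd
    have h2 : (2 : F) ≠ 0 := by
      rwa [Ne, two_eq_zero_iff_even_card, hF, Nat.not_even_iff_odd]
    have ha : algebraMap F K (s / 2) ≠ 0 := (map_ne_zero _).2 (div_ne_zero hs h2)
    have hiff (β : K) : β ≠ 0 ∧ occr s (cw q F γ β) = 1 ↔
        β ^ (q + 1) = algebraMap F K (s / 2) ^ (q + 1) := by
      rw [and_congr_right (occr_cw_eq_one_iff_pow_eq hF hK hγ htr h2 s), and_iff_right_iff_imp]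
      exact fun hpow => ne_zero_pow q.succ_ne_zero (hpow ▸ pow_ne_zero _ ha)
    simp only [hiff]
    exact card_filter_pow_eq_pow (isPrimitiveRoot_pow_sub_one hK hγ) ha
  · intro heven
    have h2 : (2 : F) = 0 := by rwa [two_eq_zero_iff_even_card, hF]
    rw [Finset.card_eq_zero, Finset.filter_eq_empty_iff]
    exact fun β _ ⟨hβ, hocc⟩ => occr_cw_ne_one_of_two_eq_zero hK hγ htr h2 hs hβ hocc
end
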